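/- Ambient Equivalence of Pointwise Dimension (Lemma). Let (F, ρ) be a (semi-)metric space, H ⊆ F a measurable subset, and p : F → H a measurable nearest-point selector, i.e. ρ(f, p(f)) = inf_{h∈H} ρ(f,h) for every f ∈ F (the infimum is attained by p(f)). For a probability measure π on F let π_H := p_*π denote the pushforward measure on H. Then: (i) for every f ∈ H and every ε > 0, π_H(B_ρ(f,2ε)) ≥ π(B_ρ(f,ε)), equivalently log(1/π_H(B_ρ(f,2ε))) ≤ log(1/π(B_ρ(f,ε))); (ii) for any fixed integer n ≥ 1, defining the majorizing-measure integral I(π,f,ρ) := inf_{α ≥ 0} { α + (1/√n) ∫_α^∞ √( log(1/π(B_ρ(f,ε))) ) dε } (valued in [0,∞]), one has (1/2)·inf_{μ∈Δ(H)} sup_{f∈H} I(μ,f,ρ) ≤ inf_{π∈Δ(F)} sup_{f∈H} I(π,f,ρ) ≤ inf_{μ∈Δ(H)} sup_{f∈H} I(μ,f,ρ), where Δ(·) denotes the probability measures on the indicated set. -/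

import Mathlib

open MeasureTheory
open scoped ENNReal NNReal

noncomputable section

/-- The pointwise dimension `log(1/p)` of a (probability) mass `p`, valued in `[0,∞]`,
with the convention `log(1/0) = ∞`. -/
def negLog (p : ℝ≥0∞) : ℝ≥0∞ :=
  if p = 0 then ⊤ else ENNReal.ofReal (Real.log (1 / p.toReal))

/-- Ball of radius `ε` around `f` for a (semi-)metric `ρ`. -/
def mball {F : Type*} (ρ : F → F → ℝ) (f : F) (ε : ℝ) : Set F := {f' | ρ f f' ≤ ε}

/-- The majorizing-measure integral
`I(π,f,ρ) = inf_{α ≥ 0} { α + (1/√n) ∫_α^∞ √(log(1/π(B_ρ(f,ε)))) dε }`, valued in `[0,∞]`. -/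
def mmIntegral {F : Type*} [MeasurableSpace F] (n : ℕ) (ρ : F → F → ℝ)
    (π : Measure F) (f : F) : ℝ≥0∞ :=
  ⨅ (α : ℝ) (_ : 0 ≤ α),
    (ENNReal.ofReal α +
      ENNReal.ofReal (1 / Real.sqrt n) *
        ∫⁻ ε in Set.Ioi α, (negLog (π (mball ρ f ε))) ^ (1 / 2 : ℝ))

theorem negLog_anti {a b : ℝ≥0∞} (hb : b ≠ ⊤) (h : a ≤ b) : negLog b ≤ negLog a := by
  unfold negLog
  by_cases ha : a = 0
  · simp [ha]
  have hb0 : b ≠ 0 := fun hb0 => ha (le_antisymm (hb0 ▸ h) bot_le)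
  have ha' : a ≠ ⊤ := ne_top_of_le_ne_top hb h
  rw [if_neg ha, if_neg hb0]
  apply ENNReal.ofReal_le_ofReal
  have h1 : 0 < a.toReal := ENNReal.toReal_pos ha ha'
  have h2 : a.toReal ≤ b.toReal := ENNReal.toReal_mono hb h
  have h3 : 0 < b.toReal := h1.trans_le h2
  apply Real.log_le_log (by positivity)
  exact one_div_le_one_div_of_le h1 h2

theorem lintegral_Ioi_double (g : ℝ → ℝ≥0∞) (α : ℝ) :
    ∫⁻ ε in Set.Ioi (2 * α), g ε = 2 * ∫⁻ ε in Set.Ioi α, g (2 * ε) := by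
  have him : (fun x : ℝ => 2 * x) '' Set.Ioi α = Set.Ioi (2 * α) := by
    ext y
    simp only [Set.mem_image, Set.mem_Ioi]
    constructor
    · rintro ⟨x, hx, rfl⟩
      linarith
    · intro hy
      exact ⟨y / 2, by linarith, by ring⟩
  rw [← him, lintegral_image_eq_lintegral_abs_deriv_mul (f' := fun _ => 2) measurableSet_Ioi
    (fun x _ => by simpa using ((hasDerivAt_id x).const_mul (2 : ℝ)).hasDerivWithinAt)
    (fun x _ y _ h => by simpa using h)]
  rw [lintegral_const_mul' _ _ (by simp)]
  simp

/-- **Ambient Equivalence of Pointwise Dimension (Lemma).** -/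
theorem ambient_equivalence_of_pointwise_dimension
    (F : Type) [MeasurableSpace F] (ρ : F → F → ℝ)
    (hsymm : ∀ f g, ρ f g = ρ g f) (hrefl : ∀ f, ρ f f = 0)
    (htri : ∀ f g h, ρ f h ≤ ρ f g + ρ g h)
    (H : Set F) (hH : MeasurableSet H)
    (p : F → F) (hp : Measurable p) (hpH : ∀ f, p f ∈ H)
    (hnear : ∀ f, ∀ h ∈ H, ρ f (p f) ≤ ρ f h)
    (n : ℕ) (hn : 1 ≤ n) :
    (∀ (π : Measure F), IsProbabilityMeasure π → ∀ f ∈ H, ∀ ε : ℝ, 0 < ε →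
        π (mball ρ f ε) ≤ (Measure.map p π) (mball ρ f (2 * ε)) ∧
        negLog ((Measure.map p π) (mball ρ f (2 * ε))) ≤ negLog (π (mball ρ f ε))) ∧
    ((1 / 2 : ℝ≥0∞) *
        (⨅ (μ : Measure F) (_ : IsProbabilityMeasure μ) (_ : μ Hᶜ = 0),
          ⨆ f ∈ H, mmIntegral n ρ μ f) ≤
      ⨅ (π : Measure F) (_ : IsProbabilityMeasure π), ⨆ f ∈ H, mmIntegral n ρ π f) ∧
    (⨅ (π : Measure F) (_ : IsProbabilityMeasure π), ⨆ f ∈ H, mmIntegral n ρ π f ≤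
      ⨅ (μ : Measure F) (_ : IsProbabilityMeasure μ) (_ : μ Hᶜ = 0),
        ⨆ f ∈ H, mmIntegral n ρ μ f) := by
  have key : ∀ (π : Measure F), IsProbabilityMeasure π → ∀ f ∈ H, ∀ ε : ℝ,
        π (mball ρ f ε) ≤ (Measure.map p π) (mball ρ f (2 * ε)) ∧
        negLog ((Measure.map p π) (mball ρ f (2 * ε))) ≤ negLog (π (mball ρ f ε)) := by
    intro π hπ f hf ε
    have h1 : π (mball ρ f ε) ≤ (Measure.map p π) (mball ρ f (2 * ε)) := by
      refine le_trans (measure_mono ?_) (Measure.le_map_apply hp.aemeasurable _)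
      intro g hg
      have hg' : ρ f g ≤ ε := hg
      change ρ f (p g) ≤ 2 * ε
      have := htri f g (p g)
      have := hnear g f hf
      have := hsymm f g
      linarith
    have := Measure.isProbabilityMeasure_map (μ := π) hp.aemeasurable
    exact ⟨h1, negLog_anti (measure_ne_top _ _) h1⟩
  refine ⟨fun π hπ f hf ε _ => key π hπ f hf ε, ?_, ?_⟩
  · refine le_iInf₂ fun π hπ => ?_
    have hm := Measure.isProbabilityMeasure_map (μ := π) hp.aemeasurable
    have h0 : (Measure.map p π) Hᶜ = 0 := by
      rw [Measure.map_apply hp hH.compl]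
      have : p ⁻¹' Hᶜ = ∅ := by
        ext x
        simp [hpH x]
      simp [this]
    have hI : (⨅ (μ : Measure F) (_ : IsProbabilityMeasure μ) (_ : μ Hᶜ = 0),
          ⨆ f ∈ H, mmIntegral n ρ μ f) ≤ 2 * ⨆ f ∈ H, mmIntegral n ρ π f := by
      refine (iInf_le_of_le (Measure.map p π) (iInf_le_of_le hm (iInf_le_of_le h0 le_rfl))).trans ?_
      refine iSup₂_le fun f hf => ?_
      have hf2 : mmIntegral n ρ (Measure.map p π) f ≤ 2 * mmIntegral n ρ π f := by
        have h2 : ∀ α : ℝ, 0 ≤ α → mmIntegral n ρ (Measure.map p π) f ≤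
            2 * (ENNReal.ofReal α + ENNReal.ofReal (1 / Real.sqrt n) *
              ∫⁻ ε in Set.Ioi α, (negLog (π (mball ρ f ε))) ^ (1 / 2 : ℝ)) := by
          intro α hα
          unfold mmIntegral
          refine (iInf₂_le (2 * α) (by positivity)).trans ?_
          rw [lintegral_Ioi_double, mul_add, ENNReal.ofReal_mul (by norm_num), mul_left_comm]
          have : ENNReal.ofReal 2 = 2 := by simp
          rw [this]
          gcongr with ε
          exact (key π hπ f hf ε).2
        have h3 : mmIntegral n ρ (Measure.map p π) f / 2 ≤ mmIntegral n ρ π f := by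
          conv_rhs => unfold mmIntegral
          refine le_iInf₂ fun α hα => ?_
          exact ENNReal.div_le_of_le_mul' (h2 α hα)
        rw [mul_comm]
        exact (ENNReal.div_le_iff_le_mul (by simp) (by simp)).1 h3
      refine hf2.trans ?_
      gcongr
      exact le_iSup₂ (f := fun f (_ : f ∈ H) => mmIntegral n ρ π f) f hf
    rw [one_div, mul_comm, ← div_eq_mul_inv]
    exact ENNReal.div_le_of_le_mul' hI
  · refine le_iInf fun μ => le_iInf₂ fun hμ _ => ?_
    exact iInf₂_le μ hμ

end
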